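/- Fix Ω₁ > 0 and α > 0, and set Ω(ε) = Ω₁/ε^{1+α}. There exist constants C₁, C₂ (depending on Ω₁ and α) and ε₀ > 0 such that for all 0 < ε < ε₀, the GP ground-state energy satisfies E^TF_ε ≤ ε^{2+2α} · E^GP_{ε,Ω(ε)} ≤ E^TF_ε + C₁ ε^{2α} + C₂ ε² |log ε|, where E^TF_ε = −(Ω₁²/4)(1 − 8ε^α/(3√π Ω₁)). In particular ε^{2+2α} E^GP_{ε,Ω(ε)} → −Ω₁²/4 as ε → 0. -/

import Mathlib

open MeasureTheory Real Filter

noncomputable section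

/-- Points of the plane. -/
abbrev Pt : Type := EuclideanSpace ℝ (Fin 2)

/-- The open unit disc. -/
def B1 : Set Pt := Metric.ball 0 1

/-- First partial derivative of a complex-valued function. -/
def pd1 (Ψ : Pt → ℂ) (x : Pt) : ℂ := fderiv ℝ Ψ x (EuclideanSpace.single 0 1)

/-- Second partial derivative of a complex-valued function. -/
def pd2 (Ψ : Pt → ℂ) (x : Pt) : ℂ := fderiv ℝ Ψ x (EuclideanSpace.single 1 1)

/-- Angular momentum operator `L = -i (x₁ ∂₂ - x₂ ∂₁)`. -/
def angMom (Ψ : Pt → ℂ) (x : Pt) : ℂ :=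
  -Complex.I * ((x 0 : ℂ) * pd2 Ψ x - (x 1 : ℂ) * pd1 Ψ x)

/-- The Gross-Pitaevskii energy density `|∇Ψ|² - Ω conj(Ψ) LΨ + |Ψ|⁴/ε²`. -/
def gpDensity (ε Ω : ℝ) (Ψ : Pt → ℂ) (x : Pt) : ℝ :=
  ‖pd1 Ψ x‖ ^ 2 + ‖pd2 Ψ x‖ ^ 2
    - Ω * (starRingEnd ℂ (Ψ x) * angMom Ψ x).re
    + ‖Ψ x‖ ^ 4 / ε ^ 2

/-- The Gross-Pitaevskii functional on the unit disc. -/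
def gpEnergy (ε Ω : ℝ) (Ψ : Pt → ℂ) : ℝ := ∫ x in B1, gpDensity ε Ω Ψ x

/-- Admissible (H¹, normalized) wave functions. -/
def gpAdm (Ψ : Pt → ℂ) : Prop :=
  DifferentiableOn ℝ Ψ B1 ∧
  IntegrableOn (fun x => ‖Ψ x‖ ^ 2) B1 ∧
  IntegrableOn (fun x => ‖pd1 Ψ x‖ ^ 2 + ‖pd2 Ψ x‖ ^ 2) B1 ∧
  IntegrableOn (fun x => ‖Ψ x‖ ^ 4) B1 ∧
  IntegrableOn (fun x => (starRingEnd ℂ (Ψ x) * angMom Ψ x).re) B1 ∧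
  (∫ x in B1, ‖Ψ x‖ ^ 2) = 1

/-- The GP ground-state energy: infimum of the functional over normalized functions. -/
def gpGround (ε Ω : ℝ) : ℝ := sInf {E | ∃ Ψ : Pt → ℂ, gpAdm Ψ ∧ E = gpEnergy ε Ω Ψ}

/-- A GP minimizer: a normalized admissible function attaining the infimum. -/
def IsGPMinimizer (ε Ω : ℝ) (Ψ : Pt → ℂ) : Prop :=
  gpAdm Ψ ∧ gpEnergy ε Ω Ψ = gpGround ε Ω

/-- The Thomas-Fermi functional. -/
def tfEnergy (Ω₀ : ℝ) (ρ : Pt → ℝ) : ℝ :=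
  ∫ x in B1, ((ρ x) ^ 2 - Ω₀ ^ 2 * ‖x‖ ^ 2 * ρ x / 4)

/-- Admissible TF densities: nonnegative, in L²(B₁), of total mass one. -/
def tfAdm (ρ : Pt → ℝ) : Prop :=
  IntegrableOn ρ B1 ∧ IntegrableOn (fun x => (ρ x) ^ 2) B1 ∧
  (∀ᵐ x ∂(volume.restrict B1), 0 ≤ ρ x) ∧ (∫ x in B1, ρ x) = 1

/-- The TF ground-state energy. -/
def tfGround (Ω₀ : ℝ) : ℝ := sInf {E | ∃ ρ : Pt → ℝ, tfAdm ρ ∧ E = tfEnergy Ω₀ ρ}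

/-- Radius of the TF "hole". -/
def R0 (Ω₀ : ℝ) : ℝ := Real.sqrt (1 - 4 / (Real.sqrt π * Ω₀))

/-- The TF minimizer. -/
def rhoTF (Ω₀ : ℝ) (x : Pt) : ℝ :=
  if Ω₀ ≤ 4 / Real.sqrt π then 1 / π - Ω₀ ^ 2 / 16 * (1 - 2 * ‖x‖ ^ 2)
  else max 0 (Ω₀ ^ 2 / 8 * (‖x‖ ^ 2 - 1) + Ω₀ / (2 * Real.sqrt π))

/-- Inner radius of the support of the TF minimizer in the rapid-rotation regime. -/
def Reps (Ω₁ α ε : ℝ) : ℝ := Real.sqrt (1 - 4 * ε ^ α / (Real.sqrt π * Ω₁))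

/-- The TF minimizer in the rapid-rotation regime. -/
def rhoTFeps (Ω₁ α ε : ℝ) (x : Pt) : ℝ :=
  Ω₁ ^ 2 / (8 * ε ^ (2 * α)) * max 0 (‖x‖ ^ 2 - (Reps Ω₁ α ε) ^ 2)

/-- The TF functional of the rapid-rotation regime. -/
def tfEpsEnergy (Ω₁ α ε : ℝ) (ρ : Pt → ℝ) : ℝ :=
  ε ^ (2 * α) * ∫ x in B1, ((ρ x) ^ 2 - Ω₁ ^ 2 * ‖x‖ ^ 2 * ρ x / (4 * ε ^ (2 * α)))


theorem rad_int (F : ℝ → ℝ) :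
    (∫ x in B1, F (‖x‖ ^ 2)) = π * ∫ s in (0:ℝ)..1, F s := by
  have h1 : (∫ x in B1, F (‖x‖ ^ 2)) =
      ∫ x : Pt, (fun r : ℝ => (Set.Iio (1:ℝ)).indicator F (r ^ 2)) ‖x‖ := by
    rw [← integral_indicator (by unfold B1; exact measurableSet_ball)]
    congr 1
    ext x
    by_cases hx : x ∈ B1
    · have h2 : ‖x‖ ^ 2 ∈ Set.Iio (1:ℝ) := by
        have : ‖x‖ < 1 := by simpa [B1] using hx
        simp only [Set.mem_Iio]; nlinarith [norm_nonneg x]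
      simp only [Set.indicator_of_mem hx, Set.indicator_of_mem h2]
    · have h2 : ‖x‖ ^ 2 ∉ Set.Iio (1:ℝ) := by
        have : 1 ≤ ‖x‖ := by simpa [B1] using hx
        simp only [Set.mem_Iio, not_lt]; nlinarith [norm_nonneg x]
      simp only [Set.indicator_of_notMem hx, Set.indicator_of_notMem h2]
  rw [h1, integral_fun_norm_addHaar volume (fun r : ℝ => (Set.Iio (1:ℝ)).indicator F (r ^ 2))]
  have h3 := integral_comp_rpow_Ioi ((Set.Iio (1:ℝ)).indicator F) (p := 2) (by norm_num)
  have h4 : (∫ s in (0:ℝ)..1, F s) = ∫ y in Set.Ioi (0:ℝ), (Set.Iio (1:ℝ)).indicator F y := by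
    rw [setIntegral_indicator measurableSet_Iio, Set.Ioi_inter_Iio,
      intervalIntegral.integral_of_le zero_le_one, integral_Ioc_eq_integral_Ioo]
  have h5 : volume.real (Metric.ball (0:Pt) 1) = π := by
    simp [Measure.real, EuclideanSpace.volume_ball_fin_two, Real.pi_nonneg]
  rw [h4, ← h3, h5]
  simp only [finrank_euclideanSpace, Fintype.card_fin]
  norm_num
  simp_rw [mul_assoc]
  rw [integral_const_mul]
  ring

theorem rad_shift (δ : ℝ) (h0 : 0 < δ) (h1 : δ ≤ 1) (G : ℝ → ℝ)
    (hG : IntervalIntegrable G volume 0 δ) :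
    (∫ x in B1, (if 0 < ‖x‖ ^ 2 - (1 - δ) then G (‖x‖ ^ 2 - (1 - δ)) else 0)) =
      π * ∫ u in (0:ℝ)..δ, G u := by
  rw [rad_int (fun s => if 0 < s - (1 - δ) then G (s - (1 - δ)) else 0)]
  congr 1
  rw [intervalIntegral.integral_comp_sub_right (fun u => if 0 < u then G u else 0) (1 - δ)]
  have e1 : (∫ u in (0 - (1 - δ))..0, (if 0 < u then G u else 0)) = 0 := by
    rw [intervalIntegral.integral_congr (g := fun _ => 0)]
    · simp
    · intro u hu
      rw [Set.uIcc_of_le (by linarith)] at hu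
      simp [not_lt.mpr hu.2]
  have e2 : (∫ u in (0:ℝ)..δ, (if 0 < u then G u else 0)) = ∫ u in (0:ℝ)..δ, G u := by
    rw [intervalIntegral.integral_of_le h0.le, intervalIntegral.integral_of_le h0.le]
    apply setIntegral_congr_fun measurableSet_Ioc
    intro u hu
    simp [hu.1]
  have i1 : IntervalIntegrable (fun u => if 0 < u then G u else 0) volume (0 - (1 - δ)) 0 := by
    apply IntervalIntegrable.congr (f := fun _ => (0:ℝ)) _ (by simp)
    intro u hu
    rw [Set.uIoc_of_le (by linarith)] at hu
    simp [not_lt.mpr hu.2]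
  have i2 : IntervalIntegrable (fun u => if 0 < u then G u else 0) volume 0 δ := by
    apply hG.congr
    intro u hu
    rw [Set.uIoc_of_le h0.le] at hu
    simp [hu.1]
  rw [show (1:ℝ) - (1 - δ) = δ by ring, ← e2,
    ← intervalIntegral.integral_add_adjacent_intervals i1 i2, e1, zero_add]

theorem meas_B1 : MeasurableSet B1 := by unfold B1; exact measurableSet_ball

theorem fin_B1 : volume B1 ≠ ⊤ := by
  unfold B1; exact measure_ball_lt_top.ne

theorem vol_B1 : volume.real B1 = π := by
  simp [B1, Measure.real, EuclideanSpace.volume_ball_fin_two, Real.pi_nonneg]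

theorem int_bdd (f : Pt → ℝ) (hf : Measurable f) (C : ℝ) (h : ∀ x ∈ B1, ‖f x‖ ≤ C) :
    IntegrableOn f B1 := by
  apply Measure.integrableOn_of_bounded (M := C) fin_B1 hf.aestronglyMeasurable
  filter_upwards [ae_restrict_mem meas_B1] with x hx using h x hx

theorem normsq_lt {x : Pt} (hx : x ∈ B1) : ‖x‖ ^ 2 < 1 := by
  have : ‖x‖ < 1 := by simpa [B1] using hx
  nlinarith [norm_nonneg x]

theorem normsq_eq (x : Pt) : ‖x‖ ^ 2 = x 0 ^ 2 + x 1 ^ 2 := by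
  simp [EuclideanSpace.norm_sq_eq, Fin.sum_univ_two]

theorem dens_lower (ε Ω : ℝ) (Ψ : Pt → ℂ) (x : Pt) :
    - (Ω ^ 2 * ‖x‖ ^ 2 * ‖Ψ x‖ ^ 2 / 4) + ‖Ψ x‖ ^ 4 / ε ^ 2 ≤ gpDensity ε Ω Ψ x := by
  unfold gpDensity angMom
  generalize pd1 Ψ x = a
  generalize pd2 Ψ x = b
  generalize Ψ x = p
  rw [normsq_eq]
  have key : 0 ≤ (a.re - Ω / 2 * x 1 * p.im) ^ 2 + (a.im + Ω / 2 * x 1 * p.re) ^ 2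
    + (b.re + Ω / 2 * x 0 * p.im) ^ 2 + (b.im - Ω / 2 * x 0 * p.re) ^ 2 := by positivity
  simp only [Complex.sq_norm, Complex.normSq_apply, Complex.mul_re, Complex.mul_im, Complex.sub_re,
    Complex.sub_im, Complex.neg_re, Complex.neg_im, Complex.I_re, Complex.I_im, Complex.conj_re,
    Complex.conj_im, Complex.ofReal_re, Complex.ofReal_im]
  nlinarith [key]

theorem gp_lower (ε Ω c δ : ℝ) (hε : 0 < ε) (hδ : 0 < δ) (hδ1 : δ ≤ 1)
    (hc : π * c * δ ^ 2 = 2) (hΩ : ε ^ 2 * Ω ^ 2 = 8 * c) (Ψ : Pt → ℂ) (h : gpAdm Ψ) :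
    (1 / ε ^ 2) * (-2 * c * (1 - δ) - 2 * c * δ / 3) ≤ gpEnergy ε Ω Ψ := by
  obtain ⟨-, h2, h3, h4, h5, h6⟩ := h
  have i0 : IntegrableOn (fun x : Pt =>
      if 0 < ‖x‖ ^ 2 - (1 - δ) then (c * (‖x‖ ^ 2 - (1 - δ))) ^ 2 else 0) B1 := by
    apply int_bdd _ _ (c ^ 2)
    · intro x hx
      have := normsq_lt hx
      split_ifs with hu
      · rw [Real.norm_eq_abs, abs_of_nonneg (by positivity), mul_pow]
        have : (‖x‖ ^ 2 - (1 - δ)) ^ 2 ≤ 1 := by nlinarith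
        nlinarith [sq_nonneg c]
      · simp; positivity
    · apply Measurable.ite
      · exact measurableSet_lt measurable_const (by fun_prop)
      · fun_prop
      · fun_prop
  have r0 := rad_shift δ hδ hδ1 (fun u => (c * u) ^ 2)
    (Continuous.intervalIntegrable (by fun_prop) _ _)
  have r1 : (∫ u in (0:ℝ)..δ, (c * u) ^ 2) = c ^ 2 * δ ^ 3 / 3 := by
    simp only [mul_pow]
    rw [intervalIntegral.integral_const_mul, integral_pow]
    norm_num; ring
  have e : (1 / ε ^ 2) * (-2 * c * (1 - δ) - 2 * c * δ / 3) =
      ∫ x in B1, (1 / ε ^ 2) * ((-2 * c * (1 - δ)) * ‖Ψ x‖ ^ 2 -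
      (if 0 < ‖x‖ ^ 2 - (1 - δ) then (c * (‖x‖ ^ 2 - (1 - δ))) ^ 2 else 0)) := by
    rw [integral_const_mul, integral_sub (h2.const_mul _) i0, integral_const_mul, h6, r0, r1]
    congr 1
    linear_combination (c * δ / 3) * hc
  rw [e]
  apply integral_mono
  · exact ((h2.const_mul _).sub i0).const_mul _
  · exact (h3.sub (h5.const_mul _)).add (h4.div_const _)
  · intro x
    refine le_trans ?_ (dens_lower ε Ω Ψ x)
    have hΩ' : Ω ^ 2 = 8 * c / ε ^ 2 := by field_simp; linarith
    rw [hΩ']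
    have hcp : 0 < c := by
      by_contra hn
      have := mul_nonneg Real.pi_pos.le (sq_nonneg δ)
      nlinarith
    have : - (8 * c / ε ^ 2 * ‖x‖ ^ 2 * ‖Ψ x‖ ^ 2 / 4) + ‖Ψ x‖ ^ 4 / ε ^ 2 =
      (1 / ε ^ 2) * ((‖Ψ x‖ ^ 2) ^ 2 - 2 * c * ‖x‖ ^ 2 * ‖Ψ x‖ ^ 2) := by ring
    rw [this]
    apply mul_le_mul_of_nonneg_left _ (by positivity)
    have hp : 0 ≤ ‖Ψ x‖ ^ 2 := by positivity
    split_ifs with hu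
    · nlinarith [sq_nonneg (‖Ψ x‖ ^ 2 - c * (‖x‖ ^ 2 - (1 - δ)))]
    · nlinarith [sq_nonneg (‖Ψ x‖ ^ 2), mul_nonneg (mul_nonneg hcp.le hp) (sub_nonneg.2 (not_lt.1 hu)), mul_nonneg (mul_nonneg hcp.le hp) (neg_nonneg.2 (not_lt.1 hu))]

/-- Regularised profile. -/
def gfun (k u : ℝ) : ℝ := if 0 < u then u ^ 2 / (Real.sqrt (u + k)) ^ 3 else 0

theorem gfun_sq (k u : ℝ) (hk : 0 < k) (hu : 0 < u) :
    gfun k u ^ 2 = u ^ 4 / (u + k) ^ 3 := by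
  have h : 0 ≤ u + k := by positivity
  simp only [gfun, hu, if_true, div_pow]
  rw [← pow_mul, ← pow_mul, mul_comm 3 2, pow_mul √(u + k), Real.sq_sqrt h]

theorem gfun_le (k u : ℝ) (hk : 0 < k) (hu : 0 < u) : gfun k u ^ 2 ≤ u := by
  rw [gfun_sq k u hk hu, div_le_iff₀ (by positivity)]
  have : u ^ 3 ≤ (u + k) ^ 3 := by gcongr; linarith
  nlinarith

theorem gfun_ge (k u : ℝ) (hk : 0 < k) (hu : 0 < u) : u - 3 * k ≤ gfun k u ^ 2 := by
  rw [gfun_sq k u hk hu, le_div_iff₀ (by positivity)]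
  have : 0 ≤ 6 * u ^ 2 * k ^ 2 + 8 * u * k ^ 3 + 3 * k ^ 4 := by positivity
  nlinarith

theorem gfun_neg (k u : ℝ) (hu : u ≤ 0) : gfun k u = 0 := by
  simp [gfun, not_lt.2 hu]

theorem gfun_deriv (k u : ℝ) (hk : 0 < k) :
    ∃ d, HasDerivAt (gfun k) d u ∧ d ^ 2 ≤ if 0 < u then 4 / (u + k) else 0 := by
  rcases lt_trichotomy u 0 with hu | hu | hu
  · refine ⟨0, ?_, by simp [hu.le.not_gt]⟩
    apply (hasDerivAt_const u (0:ℝ)).congr_of_eventuallyEq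
    filter_upwards [gt_mem_nhds hu] with y hy
    exact gfun_neg k y hy.le
  · subst hu
    refine ⟨0, ?_, by simp⟩
    have hb : (gfun k) =O[nhds 0] fun x => ‖x - 0‖ ^ 2 := by
      apply Asymptotics.IsBigO.of_bound (1 / (Real.sqrt k) ^ 3)
      filter_upwards with y
      by_cases hy : 0 < y
      · have h1 : 0 < √k := Real.sqrt_pos.2 hk
        have h2 : √k ≤ √(y + k) := Real.sqrt_le_sqrt (by linarith)
        have h3 : 0 < √(y + k) := lt_of_lt_of_le h1 h2
        simp only [gfun, hy, if_true, sub_zero, norm_div, norm_pow, Real.norm_eq_abs, abs_abs]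
        rw [abs_of_pos h3, abs_of_pos hy, one_div, mul_comm, ← div_eq_mul_inv]
        gcongr
      · rw [gfun_neg k y (not_lt.1 hy)]; simp; positivity
    have := hb.hasFDerivAt (𝕜 := ℝ) (by norm_num)
    simpa using this.hasDerivAt
  · have hs : 0 < u + k := by positivity
    have hq : 0 < √(u + k) := Real.sqrt_pos.2 hs
    have hqq : √(u + k) ^ 2 = u + k := Real.sq_sqrt hs.le
    have d1 : HasDerivAt (fun y => √(y + k)) (1 / (2 * √(u + k))) u :=
      ((hasDerivAt_id u).add_const k).sqrt hs.ne'
    have d2 := ((hasDerivAt_pow 2 u).div (d1.pow 3) (pow_ne_zero 3 hq.ne'))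
    refine ⟨_, d2.congr_of_eventuallyEq ?_, ?_⟩
    · filter_upwards [lt_mem_nhds hu] with y hy
      simp [gfun, hy]
    · simp only [hu, if_true]
      have e : ((↑(2:ℕ) * u ^ (2 - 1) * √(u + k) ^ 3 - u ^ 2 * (↑(3:ℕ) * √(u + k) ^ (3 - 1) * (1 / (2 * √(u + k))))) / (√(u + k) ^ 3) ^ 2)
        = (u * (u / 2 + 2 * k)) / ((u + k) ^ 2 * √(u + k)) := by
        have hk' : k = √(u + k) ^ 2 - u := by linarith
        clear d1 d2
        generalize √(u + k) = q at *
        rw [← hqq]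
        subst hk'
        field_simp
        push_cast
        ring
      have e' : ∀ X Y : ℝ, X = Y → Y ^ 2 ≤ 4 / (u + k) → X ^ 2 ≤ 4 / (u + k) := by
        intro X Y h; rw [h]; exact id
      refine e' _ _ e ?_
      rw [div_pow, mul_pow _ √(u + k), hqq, div_le_div_iff₀ (by positivity) hs]
      have : u * (u / 2 + 2 * k) ≤ 2 * (u + k) ^ 2 := by nlinarith [mul_pos hu hk]
      have h2 : (u * (u / 2 + 2 * k)) ^ 2 ≤ (2 * (u + k) ^ 2) ^ 2 := by gcongr
      nlinarith

/-- Complex coordinate. -/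
def zc (x : Pt) : ℂ := (x 0 : ℂ) + (x 1 : ℂ) * Complex.I

theorem zc_norm (x : Pt) : ‖zc x‖ = ‖x‖ := by
  have h : ‖zc x‖ ^ 2 = ‖x‖ ^ 2 := by
    rw [normsq_eq, Complex.sq_norm, Complex.normSq_apply]
    simp [zc]; ring
  exact (sq_eq_sq₀ (norm_nonneg _) (norm_nonneg _)).1 h

/-- The trial function. -/
def trial (A k δ : ℝ) (n : ℕ) (x : Pt) : ℂ :=
  ((A * gfun k (‖x‖ ^ 2 - (1 - δ)) : ℝ) : ℂ) * (zc x * ((‖x‖⁻¹ : ℝ) : ℂ)) ^ n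

theorem trial_norm (A k δ : ℝ) (hδ : δ < 1) (n : ℕ) (x : Pt) :
    ‖trial A k δ n x‖ ^ 2 = A ^ 2 * gfun k (‖x‖ ^ 2 - (1 - δ)) ^ 2 := by
  by_cases hx : x = 0
  · subst hx
    rw [trial, gfun_neg _ _ (by simp; linarith)]; simp
  · have : 0 < ‖x‖ := norm_pos_iff.2 hx
    simp only [trial, norm_mul, norm_pow, zc_norm, Complex.norm_real, norm_inv, norm_norm]
    rw [mul_inv_cancel₀ this.ne']
    simp [mul_pow]

theorem trial_deriv (A k δ : ℝ) (hk : 0 < k) (hδ : δ < 1) (n : ℕ) (x : Pt) :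
    DifferentiableAt ℝ (trial A k δ n) x ∧
    ‖pd1 (trial A k δ n) x‖ ^ 2 + ‖pd2 (trial A k δ n) x‖ ^ 2 ≤
      (if 0 < ‖x‖ ^ 2 - (1 - δ) then 16 * A ^ 2 * ‖x‖ ^ 2 / (‖x‖ ^ 2 - (1 - δ) + k) else 0)
        + n ^ 2 / ‖x‖ ^ 2 * ‖trial A k δ n x‖ ^ 2 ∧
    (starRingEnd ℂ (trial A k δ n x) * angMom (trial A k δ n) x).re =
      n * ‖trial A k δ n x‖ ^ 2 := by
  by_cases hx : x = 0
  · subst hx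
    have ev : trial A k δ n =ᶠ[nhds 0] fun _ => (0:ℂ) := by
      have hc : ContinuousAt (fun y : Pt => ‖y‖ ^ 2) 0 := by fun_prop
      have := hc.eventually_lt (continuousAt_const (y := 1 - δ)) (by simp; linarith)
      filter_upwards [this] with y hy
      rw [trial, gfun_neg _ _ (by linarith)]; simp
    have hf : HasFDerivAt (trial A k δ n) (0 : Pt →L[ℝ] ℂ) 0 :=
      (hasFDerivAt_const (0:ℂ) (0:Pt)).congr_of_eventuallyEq ev
    refine ⟨hf.differentiableAt, ?_, ?_⟩
    · simp only [pd1, pd2, hf.fderiv]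
      have : ¬ (0 < ‖(0:Pt)‖ ^ 2 - (1 - δ)) := by simp; linarith
      rw [if_neg this]; simp
    · simp [ev.eq_of_nhds]
  · have hr : 0 < ‖x‖ := norm_pos_iff.2 hx
    obtain ⟨d, hd, hd2⟩ := gfun_deriv k (‖x‖ ^ 2 - (1 - δ)) hk
    have hDz : ∃ D : Pt →L[ℝ] ℂ, HasFDerivAt zc D x ∧ ∀ v, D v = zc v := by
      let D := (Complex.ofRealCLM.comp (EuclideanSpace.proj 0 : Pt →L[ℝ] ℝ) +
          (Complex.ofRealCLM.comp (EuclideanSpace.proj 1 : Pt →L[ℝ] ℝ)).smulRight Complex.I)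
      have : zc = D := by ext v; simp [zc, D]
      exact ⟨D, by rw [this]; exact D.hasFDerivAt, fun v => by rw [this]⟩
    obtain ⟨Dz, hz, hDz⟩ := hDz
    have hs : HasFDerivAt (fun y : Pt => ‖y‖ ^ 2) (2 • innerSL ℝ x) x :=
      (hasStrictFDerivAt_norm_sq x).hasFDerivAt
    have hsq : √(‖x‖ ^ 2) = ‖x‖ := Real.sqrt_sq hr.le
    have hψ : HasDerivAt (fun s : ℝ => (√s)⁻¹) (-(1 / (2 * √(‖x‖ ^ 2))) / √(‖x‖ ^ 2) ^ 2)
        (‖x‖ ^ 2) :=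
      (Real.hasDerivAt_sqrt (by positivity)).inv (by rw [hsq]; exact hr.ne')
    have hi : HasFDerivAt (fun y : Pt => ‖y‖⁻¹)
        ((-(1 / (2 * √(‖x‖ ^ 2))) / √(‖x‖ ^ 2) ^ 2) • (2 • innerSL ℝ x)) x := by
      have := hψ.comp_hasFDerivAt x hs
      refine this.congr_of_eventuallyEq (Eventually.of_forall fun y => ?_)
      simp [Real.sqrt_sq (norm_nonneg y)]
    have hg : HasFDerivAt (fun y : Pt => A * gfun k (‖y‖ ^ 2 - (1 - δ)))
        (A • (d • (2 • innerSL ℝ x))) x := by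
      have := hd.comp_hasFDerivAt x (hs.sub_const (1 - δ))
      exact this.const_mul A
    have hic := Complex.ofRealCLM.hasFDerivAt.comp x hi
    have hgc := Complex.ofRealCLM.hasFDerivAt.comp x hg
    have hs2 := normsq_eq x
    have hs0 : x 0 ^ 2 + x 1 ^ 2 ≠ 0 := by rw [← hs2]; positivity
    have hs0c : (x 0 : ℂ) ^ 2 + (x 1 : ℂ) ^ 2 ≠ 0 := by
      rw [← Complex.ofReal_pow, ← Complex.ofReal_pow, ← Complex.ofReal_add]
      exact Complex.ofReal_ne_zero.2 hs0
    have hqe : ∃ D : Pt →L[ℝ] ℂ,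
        HasFDerivAt (fun y : Pt => zc y * ((‖y‖⁻¹ : ℝ) : ℂ)) D x ∧
        ∀ v : Pt, D v = Complex.I * (((x 0 * v 1 - x 1 * v 0) / ‖x‖ ^ 2 : ℝ) : ℂ) *
          (zc x * ((‖x‖⁻¹ : ℝ) : ℂ)) := by
      refine ⟨_, hz.mul hic, fun v => ?_⟩
      have hin : inner ℝ x v = x 0 * v 0 + x 1 * v 1 := by
        simp [PiLp.inner_apply, Fin.sum_univ_two]; ring
      have e1 : (-(1 / (2 * √(‖x‖ ^ 2))) / √(‖x‖ ^ 2) ^ 2) * (2 * inner ℝ x v) =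
          - ((x 0 * v 0 + x 1 * v 1) / (x 0 ^ 2 + x 1 ^ 2)) * ‖x‖⁻¹ := by
        rw [hsq, hin, ← hs2]; field_simp
      trans zc x * (((-(1 / (2 * √(‖x‖ ^ 2))) / √(‖x‖ ^ 2) ^ 2) * (2 * inner ℝ x v) : ℝ) : ℂ)
            + ((‖x‖⁻¹ : ℝ) : ℂ) * zc v
      · simp [hDz]
      rw [e1, hs2]
      generalize ‖x‖⁻¹ = r
      simp only [zc]
      push_cast
      field_simp
      ring_nf
      simp only [Complex.I_sq]
      ring
    obtain ⟨Dq, hDq, hDqv⟩ := hqe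
    have hTe : ∃ D : Pt →L[ℝ] ℂ, HasFDerivAt (trial A k δ n) D x ∧
        ∀ v : Pt, D v = (((2 * A * d * (x 0 * v 0 + x 1 * v 1) : ℝ) : ℂ) +
          Complex.I * ((n * (A * gfun k (‖x‖ ^ 2 - (1 - δ))) *
            ((x 0 * v 1 - x 1 * v 0) / ‖x‖ ^ 2) : ℝ) : ℂ)) *
          (zc x * ((‖x‖⁻¹ : ℝ) : ℂ)) ^ n := by
      refine ⟨_, hgc.mul (hDq.pow n), fun v => ?_⟩
      have hin : inner ℝ x v = x 0 * v 0 + x 1 * v 1 := by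
        simp [PiLp.inner_apply, Fin.sum_univ_two]; ring
      simp only [add_apply, smul_apply,
        ContinuousLinearMap.comp_apply, innerSL_apply_apply, hDqv, hin, Function.comp,
        Complex.ofRealCLM_apply, smul_eq_mul, nsmul_eq_mul]
      generalize zc x * ((‖x‖⁻¹ : ℝ) : ℂ) = q
      generalize gfun k (‖x‖ ^ 2 - (1 - δ)) = g
      rcases n with _ | n
      · simp; ring
      · push_cast
        ring
    obtain ⟨D, hD, hDv⟩ := hTe
    have hT := trial_norm A k δ hδ n x
    have hTd : trial A k δ n x = ((A * gfun k (‖x‖ ^ 2 - (1 - δ)) : ℝ) : ℂ) *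
      (zc x * ((‖x‖⁻¹ : ℝ) : ℂ)) ^ n := rfl
    have hw : ‖(zc x * ((‖x‖⁻¹ : ℝ) : ℂ)) ^ n‖ = 1 := by
      simp [zc_norm, hr.ne']
    have hp1 : pd1 (trial A k δ n) x = (((2 * A * d * x 0 : ℝ) : ℂ) +
          Complex.I * ((n * (A * gfun k (‖x‖ ^ 2 - (1 - δ))) *
            (- x 1 / ‖x‖ ^ 2) : ℝ) : ℂ)) * (zc x * ((‖x‖⁻¹ : ℝ) : ℂ)) ^ n := by
      rw [pd1, hD.fderiv, hDv]; simp
    have hp2 : pd2 (trial A k δ n) x = (((2 * A * d * x 1 : ℝ) : ℂ) +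
          Complex.I * ((n * (A * gfun k (‖x‖ ^ 2 - (1 - δ))) *
            (x 0 / ‖x‖ ^ 2) : ℝ) : ℂ)) * (zc x * ((‖x‖⁻¹ : ℝ) : ℂ)) ^ n := by
      rw [pd2, hD.fderiv, hDv]; simp
    have hn2 : ∀ a b : ℝ, ‖(a : ℂ) + Complex.I * (b : ℂ)‖ ^ 2 = a ^ 2 + b ^ 2 := by
      intro a b
      rw [Complex.sq_norm, Complex.normSq_apply]; simp; ring
    refine ⟨hD.differentiableAt, ?_, ?_⟩
    · rw [hp1, hp2, norm_mul, norm_mul, hw, mul_one, mul_one, hn2, hn2, hT]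
      have e3 : (2 * A * d * x 0) ^ 2 + (n * (A * gfun k (‖x‖ ^ 2 - (1 - δ))) *
            (- x 1 / ‖x‖ ^ 2)) ^ 2 + ((2 * A * d * x 1) ^ 2 +
            (n * (A * gfun k (‖x‖ ^ 2 - (1 - δ))) * (x 0 / ‖x‖ ^ 2)) ^ 2) =
          4 * A ^ 2 * ‖x‖ ^ 2 * d ^ 2 +
          n ^ 2 / ‖x‖ ^ 2 * (A ^ 2 * gfun k (‖x‖ ^ 2 - (1 - δ)) ^ 2) := by
        generalize gfun k (‖x‖ ^ 2 - (1 - δ)) = g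
        rw [hs2]; field_simp; ring
      rw [e3]
      gcongr
      refine (mul_le_mul_of_nonneg_left hd2 (by positivity)).trans (le_of_eq ?_)
      split_ifs
      · ring
      · ring
    · have e4 : angMom (trial A k δ n) x = (n : ℂ) * trial A k δ n x := by
        rw [angMom, hp1, hp2, hTd, hs2]
        generalize gfun k (x 0 ^ 2 + x 1 ^ 2 - (1 - δ)) = g
        generalize (zc x * ((‖x‖⁻¹ : ℝ) : ℂ)) ^ n = w
        push_cast
        field_simp
        ring_nf
        simp only [Complex.I_sq]
        ring
      rw [e4, mul_left_comm, mul_comm (starRingEnd ℂ _), Complex.mul_conj, Complex.normSq_eq_norm_sq]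
      norm_cast

theorem gfun_cont (k : ℝ) (hk : 0 < k) : Continuous (gfun k) := by
  rw [continuous_iff_continuousAt]
  intro u
  obtain ⟨d, hd, -⟩ := gfun_deriv k u hk
  exact hd.continuousAt

theorem int_ite (δ : ℝ) (hδ1 : δ ≤ 1) (G : ℝ → ℝ) (hG : Measurable G) (C : ℝ) (hC : 0 ≤ C)
    (h : ∀ u, 0 < u → u ≤ 1 → ‖G u‖ ≤ C) :
    IntegrableOn (fun x : Pt =>
      if 0 < ‖x‖ ^ 2 - (1 - δ) then G (‖x‖ ^ 2 - (1 - δ)) else 0) B1 := by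
  apply int_bdd _ _ C
  · intro x hx
    have := normsq_lt hx
    split_ifs with hu
    · exact h _ hu (by linarith)
    · simpa using hC
  · apply Measurable.ite
    · exact measurableSet_lt measurable_const (by fun_prop)
    · fun_prop
    · fun_prop

set_option maxHeartbeats 2000000 in
theorem gp_upper (ε Ω c δ : ℝ) (hε : 0 < ε) (hε1 : ε ≤ 1) (hδ : 0 < δ) (hδ1 : δ ≤ 1 / 12)
    (hc : π * c * δ ^ 2 = 2) (hΩ0 : 0 ≤ Ω) (hΩ : ε ^ 2 * Ω ^ 2 = 8 * c) :
    ∃ Ψ : Pt → ℂ, gpAdm Ψ ∧ ε ^ 2 * gpEnergy ε Ω Ψ ≤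
      -2 * c * (1 - δ) - 2 * c * δ / 3 + 56 + 32 * π * ε ^ 2 * c * Real.log ((1 + δ) / δ) := by
  have hcp : 0 < c := by
    by_contra hn
    have := mul_nonneg Real.pi_pos.le (sq_nonneg δ)
    nlinarith
  obtain ⟨k, hkd⟩ : ∃ k, k = δ ^ 2 := ⟨_, rfl⟩
  have hk : 0 < k := by rw [hkd]; positivity
  have hδ' : δ ≤ 1 := by linarith
  have hδ'' : δ < 1 := by linarith
  -- integrals
  have I0 : (∫ x in B1, (if 0 < ‖x‖ ^ 2 - (1 - δ) then (1:ℝ) else 0)) = π * δ := by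
    rw [rad_shift δ hδ hδ' (fun _ => 1) (by simp)]; simp
  have I1 : (∫ x in B1, (if 0 < ‖x‖ ^ 2 - (1 - δ) then ‖x‖ ^ 2 - (1 - δ) else 0)) = 1 / c := by
    rw [rad_shift δ hδ hδ' (fun u => u) (Continuous.intervalIntegrable (by fun_prop) _ _)]
    rw [integral_id]; field_simp; linarith
  have I2 : (∫ x in B1, (if 0 < ‖x‖ ^ 2 - (1 - δ) then (‖x‖ ^ 2 - (1 - δ)) ^ 2 else 0)) =
      2 * δ / (3 * c) := by
    rw [rad_shift δ hδ hδ' (fun u => u ^ 2) (Continuous.intervalIntegrable (by fun_prop) _ _)]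
    rw [integral_pow]; norm_num; field_simp; linear_combination hc
  have IL : (∫ x in B1, (if 0 < ‖x‖ ^ 2 - (1 - δ) then (‖x‖ ^ 2 - (1 - δ) + k)⁻¹ else 0)) =
      π * Real.log ((1 + δ) / δ) := by
    rw [rad_shift δ hδ hδ' (fun u => (u + k)⁻¹)]
    · rw [intervalIntegral.integral_comp_add_right (fun u => u⁻¹) k,
        integral_inv_of_pos (by linarith) (by linarith)]
      congr 2
      rw [hkd]; field_simp; ring
    · apply ContinuousOn.intervalIntegrable
      apply ContinuousOn.inv₀ (by fun_prop)
      intro u hu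
      rw [Set.uIcc_of_le hδ.le] at hu
      have := hu.1
      positivity
  have J0 := int_ite δ hδ' (fun _ => 1) (by fun_prop) 1 (by norm_num) (by intros; simp)
  have J1 := int_ite δ hδ' (fun u => u) (by fun_prop) 1 (by norm_num)
    (by intro u h0 h1; rwa [Real.norm_eq_abs, abs_of_pos h0])
  have J2 := int_ite δ hδ' (fun u => u ^ 2) (by fun_prop) 1 (by norm_num)
    (by intro u h0 h1; rw [Real.norm_eq_abs, abs_of_pos (by positivity)]; nlinarith)
  have JL := int_ite δ hδ' (fun u => (u + k)⁻¹) (by fun_prop) (k⁻¹) (by positivity)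
    (by
      intro u h0 h1
      rw [Real.norm_eq_abs, abs_of_pos (by positivity)]
      exact inv_anti₀ hk (by linarith))
  have gc := gfun_cont k hk
  have JH : IntegrableOn (fun x : Pt => gfun k (‖x‖ ^ 2 - (1 - δ)) ^ 2) B1 := by
    apply int_bdd _ (by have := gc.measurable; fun_prop) 1
    intro x hx
    have := normsq_lt hx
    rw [Real.norm_eq_abs, abs_of_nonneg (by positivity)]
    rcases le_or_gt (‖x‖ ^ 2 - (1 - δ)) 0 with hu | hu
    · rw [gfun_neg _ _ hu]; norm_num
    · linarith [gfun_le k _ hk hu]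
  obtain ⟨M, hM⟩ : ∃ M, M = ∫ x in B1, gfun k (‖x‖ ^ 2 - (1 - δ)) ^ 2 := ⟨_, rfl⟩
  have hM1 : M ≤ 1 / c := by
    rw [hM, ← I1]
    apply integral_mono JH J1
    intro x
    simp only
    split_ifs with hu
    · exact gfun_le k _ hk hu
    · rw [gfun_neg _ _ (not_lt.1 hu)]; simp
  have hM2 : 1 / c - 3 * k * (π * δ) ≤ M := by
    rw [hM, ← I1, ← I0, ← integral_const_mul, ← integral_sub J1 (J0.const_mul _)]
    apply integral_mono (J1.sub (J0.const_mul _)) JH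
    intro x
    simp only [Pi.sub_apply]
    split_ifs with hu
    · linarith [gfun_ge k _ hk hu]
    · rw [gfun_neg _ _ (not_lt.1 hu)]; simp
  have hcM1 : c * M ≤ 1 := by
    rw [le_div_iff₀ hcp] at hM1; linarith
  have hcM2 : 1 - 6 * δ ≤ c * M := by
    have h1 := mul_le_mul_of_nonneg_left hM2 hcp.le
    have h2 : c * (1 / c - 3 * k * (π * δ)) = 1 - 6 * δ := by
      rw [hkd]; field_simp; linear_combination (-3 * δ) * hc
    linarith
  have hMp : 0 < M := by
    by_contra hn
    nlinarith
  obtain ⟨N, hN⟩ : ∃ N, N = 1 / M := ⟨_, rfl⟩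
  have hNp : 0 < N := by rw [hN]; positivity
  have hNM : N * M = 1 := by rw [hN]; field_simp
  have hN1 : c ≤ N := by rw [hN, le_div_iff₀ hMp]; exact hcM1
  have hN3 : N * (1 - 6 * δ) ≤ c := by
    have := mul_le_mul_of_nonneg_left hcM2 hNp.le
    nlinarith
  have hN2 : N ≤ 2 * c := by nlinarith
  have hNsq : N ^ 2 ≤ c ^ 2 * (1 + 48 * δ) := by
    have h1 : (N * (1 - 6 * δ)) ^ 2 ≤ c ^ 2 := by
      apply pow_le_pow_left₀ _ hN3
      apply mul_nonneg hNp.le; linarith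
    have h2 : 1 ≤ (1 - 6 * δ) ^ 2 * (1 + 48 * δ) := by
      have : 0 ≤ δ * (36 - 540 * δ + 1728 * δ ^ 2) := by
        apply mul_nonneg hδ.le; nlinarith
      nlinarith
    calc N ^ 2 ≤ N ^ 2 * ((1 - 6 * δ) ^ 2 * (1 + 48 * δ)) :=
          le_mul_of_one_le_right (by positivity) h2
      _ = (N * (1 - 6 * δ)) ^ 2 * (1 + 48 * δ) := by ring
      _ ≤ _ := mul_le_mul_of_nonneg_right h1 (by positivity)
  -- trial function
  obtain ⟨n, hn⟩ : ∃ n : ℕ, n = ⌊Ω / 2⌋₊ := ⟨_, rfl⟩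
  have hnle : (n : ℝ) ≤ Ω / 2 := by rw [hn]; exact Nat.floor_le (by positivity)
  have hnge : Ω / 2 - 1 ≤ n := by rw [hn]; linarith [Nat.lt_floor_add_one (Ω / 2)]
  have hA : √N ^ 2 = N := Real.sq_sqrt hNp.le
  obtain ⟨Ψ, hΨ⟩ : ∃ Ψ, Ψ = trial (√N) k δ n := ⟨_, rfl⟩
  have hnorm : ∀ x, ‖Ψ x‖ ^ 2 = N * gfun k (‖x‖ ^ 2 - (1 - δ)) ^ 2 := by
    intro x; rw [hΨ, trial_norm _ _ _ hδ'', hA]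
  have hder : ∀ x, DifferentiableAt ℝ Ψ x ∧
    ‖pd1 Ψ x‖ ^ 2 + ‖pd2 Ψ x‖ ^ 2 ≤
      (if 0 < ‖x‖ ^ 2 - (1 - δ) then 16 * N * ‖x‖ ^ 2 / (‖x‖ ^ 2 - (1 - δ) + k) else 0)
        + n ^ 2 / ‖x‖ ^ 2 * ‖Ψ x‖ ^ 2 ∧
    (starRingEnd ℂ (Ψ x) * angMom Ψ x).re = n * ‖Ψ x‖ ^ 2 := by
    intro x
    have := trial_deriv (√N) k δ hk hδ'' n x
    rw [hA, ← hΨ] at this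
    exact this
  have hdiff : Differentiable ℝ Ψ := fun x => (hder x).1
  have hmeas : Measurable Ψ := hdiff.continuous.measurable
  have hmd1 : Measurable (pd1 Ψ) := by unfold pd1; exact measurable_fderiv_apply_const ℝ Ψ _
  have hmd2 : Measurable (pd2 Ψ) := by unfold pd2; exact measurable_fderiv_apply_const ℝ Ψ _
  have hb : ∀ x ∈ B1, ‖Ψ x‖ ^ 2 ≤ N := by
    intro x hx
    rw [hnorm]
    have := normsq_lt hx
    rcases le_or_gt (‖x‖ ^ 2 - (1 - δ)) 0 with hu | hu
    · rw [gfun_neg _ _ hu]; simpa using hNp.le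
    · have := gfun_le k _ hk hu
      nlinarith
  have K2 : IntegrableOn (fun x => ‖Ψ x‖ ^ 2) B1 := by
    simp only [hnorm]; exact JH.const_mul _
  have K4 : IntegrableOn (fun x => ‖Ψ x‖ ^ 4) B1 := by
    apply int_bdd _ (by fun_prop) (N ^ 2)
    intro x hx
    rw [Real.norm_eq_abs, abs_of_nonneg (by positivity)]
    have := hb x hx
    have h0 : 0 ≤ ‖Ψ x‖ ^ 2 := by positivity
    nlinarith
  have KL : IntegrableOn (fun x => (starRingEnd ℂ (Ψ x) * angMom Ψ x).re) B1 := by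
    simp only [(hder _).2.2]; exact K2.const_mul _
  have Kd : IntegrableOn (fun x => ‖pd1 Ψ x‖ ^ 2 + ‖pd2 Ψ x‖ ^ 2) B1 := by
    apply int_bdd _ (by fun_prop) (16 * N / k + n ^ 2 * 2 * N)
    intro x hx
    rw [Real.norm_eq_abs, abs_of_nonneg (by positivity)]
    refine (hder x).2.1.trans ?_
    have h1 := normsq_lt hx
    split_ifs with hu
    · have hs : 1 / 2 ≤ ‖x‖ ^ 2 := by linarith
      apply add_le_add
      · apply div_le_div₀ (by positivity) _ hk (by linarith)
        nlinarith
      · apply mul_le_mul _ (hb x hx) (by positivity) (by positivity)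
        rw [div_le_iff₀ (by linarith)]
        nlinarith [sq_nonneg (n:ℝ)]
    · rw [hnorm, gfun_neg _ _ (not_lt.1 hu)]; simp; positivity
  have mass : (∫ x in B1, ‖Ψ x‖ ^ 2) = 1 := by
    simp only [hnorm]; rw [integral_const_mul, ← hM, hNM]
  have hadm : gpAdm Ψ := ⟨hdiff.differentiableOn, K2, Kd, K4, KL, mass⟩
  refine ⟨Ψ, hadm, ?_⟩
  have Kall : IntegrableOn (fun x => ε ^ 2 * gpDensity ε Ω Ψ x) B1 :=
    ((Kd.sub (KL.const_mul _)).add (K4.div_const _)).const_mul _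
  have hpi : 0 < π := Real.pi_pos
  have hpt : ∀ x ∈ B1, ε ^ 2 * gpDensity ε Ω Ψ x ≤
      16 * ε ^ 2 * N * (if 0 < ‖x‖ ^ 2 - (1 - δ) then (‖x‖ ^ 2 - (1 - δ) + k)⁻¹ else 0)
      + (18 - 2 * c * (1 - δ)) * ‖Ψ x‖ ^ 2
      + (N ^ 2 - 2 * c ^ 2) *
        (if 0 < ‖x‖ ^ 2 - (1 - δ) then (‖x‖ ^ 2 - (1 - δ)) ^ 2 else 0)
      + 6 * k * c ^ 2 * (if 0 < ‖x‖ ^ 2 - (1 - δ) then ‖x‖ ^ 2 - (1 - δ) else 0) := by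
    intro x hx
    have h1 := normsq_lt hx
    obtain ⟨-, hd, hL⟩ := hder x
    unfold gpDensity
    rw [hL]
    have h4 : ‖Ψ x‖ ^ 4 = (‖Ψ x‖ ^ 2) ^ 2 := by ring
    rw [h4]
    by_cases hu : 0 < ‖x‖ ^ 2 - (1 - δ)
    · simp only [if_pos hu] at hd ⊢
      have hle := gfun_le k _ hk hu
      have hge := gfun_ge k _ hk hu
      have hρ := hnorm x
      have hg0 : 0 ≤ gfun k (‖x‖ ^ 2 - (1 - δ)) ^ 2 := sq_nonneg _
      clear hnorm hder hb hM I0 I1 I2 IL J0 J1 J2 JL JH K2 K4 KL Kd Kall mass hadm hL hx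
      generalize ‖x‖ ^ 2 = s at *
      generalize ‖Ψ x‖ ^ 2 = ρ at *
      generalize gfun k (s - (1 - δ)) ^ 2 = g at *
      have hs : 1 / 2 ≤ s := by linarith
      have hs0 : 0 < s := by linarith
      have hcδ : c * δ ^ 2 ≤ 1 := by
        have := Real.pi_gt_three
        have h0 : 0 ≤ c * δ ^ 2 := by positivity
        nlinarith
      have b1 : (n - Ω * s / 2) ^ 2 ≤ 1 + Ω ^ 2 * δ ^ 2 / 4 := by
        have hl : -1 ≤ n - Ω * s / 2 := by nlinarith
        have hr : n - Ω * s / 2 ≤ Ω * δ / 2 := by nlinarith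
        have hp : 0 ≤ Ω * δ / 2 := by positivity
        rcases le_or_gt 0 (n - Ω * s / 2) with h | h
        · nlinarith
        · nlinarith
      have b2 : ε ^ 2 * (n - Ω * s / 2) ^ 2 ≤ 18 * s := by
        have h2 := mul_le_mul_of_nonneg_left b1 (sq_nonneg ε)
        have h3 : ε ^ 2 * (1 + Ω ^ 2 * δ ^ 2 / 4) = ε ^ 2 + 2 * (c * δ ^ 2) := by
          linear_combination (δ ^ 2 / 4) * hΩ
        nlinarith
      have b3 : ε ^ 2 * (n ^ 2 / s - Ω * n) ≤ 18 - 2 * c * s := by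
        have e : ε ^ 2 * (n ^ 2 / s - Ω * n) = ε ^ 2 * (n - Ω * s / 2) ^ 2 / s - 2 * c * s := by
          field_simp
          linear_combination (- s ^ 2) * hΩ
        have : ε ^ 2 * (n - Ω * s / 2) ^ 2 / s ≤ 18 := by rwa [div_le_iff₀ hs0]
        linarith
      obtain ⟨u, hu'⟩ : ∃ u, u = s - (1 - δ) := ⟨_, rfl⟩
      have hsu : s = u + (1 - δ) := by linarith
      rw [← hu'] at hu hd hle hge ⊢
      have b4 : 16 * N * s / (u + k) ≤ 16 * N * (u + k)⁻¹ := by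
        rw [div_eq_mul_inv]
        apply mul_le_mul_of_nonneg_right _ (by positivity)
        nlinarith
      have hρ0 : 0 ≤ ρ := by rw [hρ]; positivity
      have b5 : ρ ^ 2 ≤ N ^ 2 * u ^ 2 := by
        rw [hρ, mul_pow]; gcongr
      have b6 : c * (u - 3 * k) ≤ ρ := by
        rw [hρ]
        nlinarith
      have b7 : u * c * (c * (u - 3 * k)) ≤ u * c * ρ :=
        mul_le_mul_of_nonneg_left b6 (by positivity)
      have b8 := mul_le_mul_of_nonneg_right b3 hρ0
      have b9 := mul_le_mul_of_nonneg_left (hd.trans (add_le_add_left b4 _)) (sq_nonneg ε)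
      have e0 : ε ^ 2 * (ρ ^ 2 / ε ^ 2) = ρ ^ 2 := by field_simp
      have e1 : ∀ P : ℝ, ε ^ 2 * (P - Ω * (n * ρ) + ρ ^ 2 / ε ^ 2) =
          ε ^ 2 * P - ε ^ 2 * Ω * n * ρ + ρ ^ 2 := by
        intro P; rw [mul_add, e0]; ring
      rw [e1]
      have e2 : 2 * c * s * ρ = 2 * (u * c * ρ) + 2 * c * (1 - δ) * ρ := by rw [hsu]; ring
      nlinarith
    · simp only [if_neg hu] at hd ⊢
      have h0 : ‖Ψ x‖ ^ 2 = 0 := by rw [hnorm, gfun_neg _ _ (not_lt.1 hu)]; simp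
      rw [h0] at hd ⊢
      simp at hd ⊢
      nlinarith [sq_nonneg ε]
  have hfin : ε ^ 2 * gpEnergy ε Ω Ψ ≤ 16 * ε ^ 2 * N * (π * Real.log ((1 + δ) / δ))
      + (18 - 2 * c * (1 - δ)) * 1 + (N ^ 2 - 2 * c ^ 2) * (2 * δ / (3 * c))
      + 6 * k * c ^ 2 * (1 / c) := by
    unfold gpEnergy
    rw [← integral_const_mul]
    have G1 := JL.const_mul (16 * ε ^ 2 * N)
    have G2 := K2.const_mul (18 - 2 * c * (1 - δ))
    have G3 := J2.const_mul (N ^ 2 - 2 * c ^ 2)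
    have G4 := J1.const_mul (6 * k * c ^ 2)
    refine (setIntegral_mono_on Kall (((G1.add G2).add G3).add G4) meas_B1 hpt).trans
      (le_of_eq ?_)
    have E := integral_add ((G1.add G2).add G3) G4
    have E2 := integral_add (G1.add G2) G3
    have E3 := integral_add G1 G2
    refine E.trans ?_
    rw [integral_const_mul, I1]
    congr 1
    refine E2.trans ?_
    rw [integral_const_mul, I2]
    congr 1
    refine E3.trans ?_
    rw [integral_const_mul, integral_const_mul, IL, mass]
  have hlog : 0 ≤ Real.log ((1 + δ) / δ) := by
    apply Real.log_nonneg
    rw [le_div_iff₀ hδ]; linarith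
  have t1 : 16 * ε ^ 2 * N * (π * Real.log ((1 + δ) / δ)) ≤
      32 * π * ε ^ 2 * c * Real.log ((1 + δ) / δ) := by
    have : 0 ≤ 16 * ε ^ 2 * π * Real.log ((1 + δ) / δ) := by positivity
    nlinarith
  have t2 : (N ^ 2 - 2 * c ^ 2) * (2 * δ / (3 * c)) ≤ - 2 * c * δ / 3 + 32 * c * δ ^ 2 := by
    have h1 : N ^ 2 - 2 * c ^ 2 ≤ c ^ 2 * (48 * δ - 1) := by linarith
    refine (mul_le_mul_of_nonneg_right h1 (by positivity)).trans (le_of_eq ?_)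
    field_simp
    ring
  have t3 : 6 * k * c ^ 2 * (1 / c) = 6 * c * δ ^ 2 := by rw [hkd]; field_simp
  have t4 : c * δ ^ 2 ≤ 1 := by
    have := Real.pi_gt_three
    have h0 : 0 ≤ c * δ ^ 2 := by positivity
    nlinarith
  linarith

theorem final_bounds (Ω₁ ε e : ℝ) (hΩ : 0 < Ω₁) (hε : 0 < ε) (hε1 : ε ≤ 1) (he : 0 < e)
    (hδ : 4 * e / (√π * Ω₁) ≤ 1 / 12) :
    -(Ω₁ ^ 2 / 4) * (1 - 8 * e / (3 * √π * Ω₁)) ≤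
      ε ^ 2 * e ^ 2 * gpGround ε (Ω₁ / (ε * e)) ∧
    ε ^ 2 * e ^ 2 * gpGround ε (Ω₁ / (ε * e)) ≤
      -(Ω₁ ^ 2 / 4) * (1 - 8 * e / (3 * √π * Ω₁)) + 56 * e ^ 2 +
        4 * π * Ω₁ ^ 2 * ε ^ 2 *
          Real.log ((1 + 4 * e / (√π * Ω₁)) / (4 * e / (√π * Ω₁))) := by
  have hpi : 0 < √π := Real.sqrt_pos.2 Real.pi_pos
  have hpi2 : √π ^ 2 = π := Real.sq_sqrt Real.pi_pos.le
  obtain ⟨δ, hδd⟩ : ∃ δ, δ = 4 * e / (√π * Ω₁) := ⟨_, rfl⟩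
  obtain ⟨c, hcd⟩ : ∃ c, c = Ω₁ ^ 2 / (8 * e ^ 2) := ⟨_, rfl⟩
  obtain ⟨Ω, hΩd⟩ : ∃ Ω, Ω = Ω₁ / (ε * e) := ⟨_, rfl⟩
  have hδ0 : 0 < δ := by rw [hδd]; positivity
  have hΩ0 : 0 ≤ Ω := by rw [hΩd]; positivity
  have h1 : π * c * δ ^ 2 = 2 := by
    rw [hcd, hδd, div_pow, mul_pow, mul_pow, hpi2]; field_simp; norm_num
  have h2 : ε ^ 2 * Ω ^ 2 = 8 * c := by
    rw [hcd, hΩd]; field_simp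
  have hT : -(Ω₁ ^ 2 / 4) * (1 - 8 * e / (3 * √π * Ω₁)) =
      e ^ 2 * (-2 * c * (1 - δ) - 2 * c * δ / 3) := by
    rw [hcd, hδd]; field_simp; ring
  rw [← hδd] at hδ ⊢
  rw [← hΩd, hT]
  have hlow := gp_lower ε Ω c δ hε hδ0 (by linarith) h1 h2
  obtain ⟨Ψ, hΨ, hup⟩ := gp_upper ε Ω c δ hε hε1 hδ0 hδ h1 hΩ0 h2
  have hne : {E | ∃ Ψ : Pt → ℂ, gpAdm Ψ ∧ E = gpEnergy ε Ω Ψ}.Nonempty := ⟨_, Ψ, hΨ, rfl⟩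
  have hge : (1 / ε ^ 2) * (-2 * c * (1 - δ) - 2 * c * δ / 3) ≤ gpGround ε Ω := by
    apply le_csInf hne
    rintro _ ⟨Φ, hΦ, rfl⟩
    exact hlow Φ hΦ
  have hbdd : BddBelow {E | ∃ Ψ : Pt → ℂ, gpAdm Ψ ∧ E = gpEnergy ε Ω Ψ} := by
    refine ⟨(1 / ε ^ 2) * (-2 * c * (1 - δ) - 2 * c * δ / 3), ?_⟩
    rintro _ ⟨Φ, hΦ, rfl⟩
    exact hlow Φ hΦ
  have hle : gpGround ε Ω ≤ gpEnergy ε Ω Ψ := csInf_le hbdd ⟨Ψ, hΨ, rfl⟩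
  constructor
  · have := mul_le_mul_of_nonneg_left hge (by positivity : 0 ≤ ε ^ 2 * e ^ 2)
    refine le_trans (le_of_eq ?_) this
    field_simp
  · have h3 := mul_le_mul_of_nonneg_left hle (by positivity : 0 ≤ ε ^ 2 * e ^ 2)
    have h4 := mul_le_mul_of_nonneg_left hup (by positivity : 0 ≤ e ^ 2)
    have h5 : e ^ 2 * (32 * π * ε ^ 2 * c * Real.log ((1 + δ) / δ)) =
        4 * π * Ω₁ ^ 2 * ε ^ 2 * Real.log ((1 + δ) / δ) := by
      rw [hcd]; field_simp; ring
    linarith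

theorem stmt17 (Ω₁ α : ℝ) (hΩ : 0 < Ω₁) (hα : 0 < α) :
    (∃ (C₁ C₂ ε₀ : ℝ), 0 < ε₀ ∧ ∀ ε : ℝ, 0 < ε → ε < ε₀ →
      -(Ω₁ ^ 2 / 4) * (1 - 8 * ε ^ α / (3 * Real.sqrt π * Ω₁)) ≤
        ε ^ (2 + 2 * α) * gpGround ε (Ω₁ / ε ^ (1 + α)) ∧
      ε ^ (2 + 2 * α) * gpGround ε (Ω₁ / ε ^ (1 + α)) ≤
        -(Ω₁ ^ 2 / 4) * (1 - 8 * ε ^ α / (3 * Real.sqrt π * Ω₁))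
          + C₁ * ε ^ (2 * α) + C₂ * ε ^ 2 * |Real.log ε|) ∧
    Tendsto (fun ε : ℝ => ε ^ (2 + 2 * α) * gpGround ε (Ω₁ / ε ^ (1 + α)))
      (nhdsWithin 0 (Set.Ioi 0)) (nhds (-(Ω₁ ^ 2 / 4))) := by
  have hpi : 0 < √π := Real.sqrt_pos.2 Real.pi_pos
  have hα0 : Tendsto (fun ε : ℝ => ε ^ α) (nhdsWithin 0 (Set.Ioi 0)) (nhds 0) := by
    have h := (Real.continuousAt_rpow_const 0 α (Or.inr hα.le)).tendsto
    rw [Real.zero_rpow hα.ne'] at h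
    exact h.mono_left nhdsWithin_le_nhds
  have hid : Tendsto (fun ε : ℝ => ε) (nhdsWithin 0 (Set.Ioi 0)) (nhds 0) :=
    tendsto_id.mono_left nhdsWithin_le_nhds
  have hδ0 : Tendsto (fun ε : ℝ => 4 * ε ^ α / (√π * Ω₁)) (nhdsWithin 0 (Set.Ioi 0)) (nhds 0) := by
    simpa using (hα0.const_mul 4).div_const (√π * Ω₁)
  have hev : ∀ᶠ ε : ℝ in nhdsWithin 0 (Set.Ioi 0),
      4 * ε ^ α / (√π * Ω₁) < 1 / 12 ∧ ε < Real.exp (-1) :=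
    (hδ0.eventually_lt_const (by norm_num)).and (hid.eventually_lt_const (Real.exp_pos _))
  obtain ⟨ε₀, hε₀, hsub⟩ := mem_nhdsGT_iff_exists_Ioo_subset.1 hev
  have main : ∀ ε : ℝ, 0 < ε → ε < ε₀ →
      -(Ω₁ ^ 2 / 4) * (1 - 8 * ε ^ α / (3 * Real.sqrt π * Ω₁)) ≤
        ε ^ (2 + 2 * α) * gpGround ε (Ω₁ / ε ^ (1 + α)) ∧
      ε ^ (2 + 2 * α) * gpGround ε (Ω₁ / ε ^ (1 + α)) ≤
        -(Ω₁ ^ 2 / 4) * (1 - 8 * ε ^ α / (3 * Real.sqrt π * Ω₁))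
          + 56 * ε ^ (2 * α) +
          (4 * π * Ω₁ ^ 2 * (|Real.log (√π * Ω₁ / 2)| + α)) * ε ^ 2 * |Real.log ε| := by
    intro ε h0 h1
    obtain ⟨hd, hexp⟩ := hsub ⟨h0, h1⟩
    have he : 0 < ε ^ α := Real.rpow_pos_of_pos h0 α
    have hlogε : Real.log ε < -1 := by
      rw [← Real.log_exp (-1)]; exact Real.log_lt_log h0 hexp
    have hε1 : ε ≤ 1 := by
      have : Real.exp (-1) ≤ 1 := by rw [Real.exp_le_one_iff]; norm_num
      linarith
    have p1 : ε ^ (1 + α) = ε * ε ^ α := by rw [Real.rpow_add h0, Real.rpow_one]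
    have p2 : ε ^ (2 * α) = (ε ^ α) ^ 2 := by
      rw [mul_comm, Real.rpow_mul h0.le, Real.rpow_two]
    have p3 : ε ^ (2 + 2 * α) = ε ^ 2 * (ε ^ α) ^ 2 := by
      rw [Real.rpow_add h0, p2, Real.rpow_two]
    have hb := final_bounds Ω₁ ε (ε ^ α) hΩ h0 hε1 he hd.le
    rw [p1, p2, p3]
    refine ⟨hb.1, hb.2.trans ?_⟩
    have hδp : 0 < 4 * ε ^ α / (√π * Ω₁) := by positivity
    have hl1 : Real.log ((1 + 4 * ε ^ α / (√π * Ω₁)) / (4 * ε ^ α / (√π * Ω₁))) ≤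
        Real.log (√π * Ω₁ / 2) - α * Real.log ε := by
      rw [← Real.log_rpow h0, ← Real.log_div (by positivity) he.ne']
      apply Real.log_le_log (by positivity)
      calc (1 + 4 * ε ^ α / (√π * Ω₁)) / (4 * ε ^ α / (√π * Ω₁))
          ≤ 2 / (4 * ε ^ α / (√π * Ω₁)) := by
            apply div_le_div_of_nonneg_right _ hδp.le
            linarith
        _ = √π * Ω₁ / 2 / ε ^ α := by field_simp; norm_num
    have habs : |Real.log ε| = - Real.log ε := abs_of_neg (by linarith)
    have hl2 : Real.log ((1 + 4 * ε ^ α / (√π * Ω₁)) / (4 * ε ^ α / (√π * Ω₁))) ≤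
        (|Real.log (√π * Ω₁ / 2)| + α) * |Real.log ε| := by
      rw [habs]
      have a1 := le_abs_self (Real.log (√π * Ω₁ / 2))
      have a2 := abs_nonneg (Real.log (√π * Ω₁ / 2))
      nlinarith
    have h5 := mul_le_mul_of_nonneg_left hl2
      (by have := Real.pi_pos; positivity : 0 ≤ 4 * π * Ω₁ ^ 2 * ε ^ 2)
    linarith
  refine ⟨⟨56, 4 * π * Ω₁ ^ 2 * (|Real.log (√π * Ω₁ / 2)| + α), ε₀, hε₀, main⟩, ?_⟩
  have hlowT : Tendsto (fun ε : ℝ => -(Ω₁ ^ 2 / 4) * (1 - 8 * ε ^ α / (3 * Real.sqrt π * Ω₁)))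
      (nhdsWithin 0 (Set.Ioi 0)) (nhds (-(Ω₁ ^ 2 / 4))) := by
    simpa using (((hα0.const_mul 8).div_const (3 * √π * Ω₁)).const_sub 1).const_mul
      (-(Ω₁ ^ 2 / 4))
  have h2α : Tendsto (fun ε : ℝ => ε ^ (2 * α)) (nhdsWithin 0 (Set.Ioi 0)) (nhds 0) := by
    have h := (Real.continuousAt_rpow_const 0 (2 * α) (Or.inr (by positivity))).tendsto
    rw [Real.zero_rpow (by positivity)] at h
    exact h.mono_left nhdsWithin_le_nhds
  have hlog : Tendsto (fun ε : ℝ => ε ^ 2 * |Real.log ε|)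
      (nhdsWithin 0 (Set.Ioi 0)) (nhds 0) := by
    have hc : Continuous (fun ε : ℝ => |ε| * |ε * Real.log ε|) :=
      continuous_abs.mul Real.continuous_mul_log.abs
    have h := (hc.tendsto 0).mono_left (nhdsWithin_le_nhds (s := Set.Ioi 0))
    simp only [abs_zero, zero_mul] at h
    refine h.congr fun ε => ?_
    rw [abs_mul, ← mul_assoc, ← sq, sq_abs]
  have hupT : Tendsto (fun ε : ℝ => -(Ω₁ ^ 2 / 4) * (1 - 8 * ε ^ α / (3 * Real.sqrt π * Ω₁))
          + 56 * ε ^ (2 * α) +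
          (4 * π * Ω₁ ^ 2 * (|Real.log (√π * Ω₁ / 2)| + α)) * ε ^ 2 * |Real.log ε|)
      (nhdsWithin 0 (Set.Ioi 0)) (nhds (-(Ω₁ ^ 2 / 4))) := by
    have h := (hlowT.add (h2α.const_mul 56)).add
      (hlog.const_mul (4 * π * Ω₁ ^ 2 * (|Real.log (√π * Ω₁ / 2)| + α)))
    simp only [mul_zero, add_zero, ← mul_assoc] at h
    exact h
  have hmem : ∀ᶠ ε : ℝ in nhdsWithin 0 (Set.Ioi 0), ε ∈ Set.Ioo 0 ε₀ :=
    Ioo_mem_nhdsGT hε₀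
  refine tendsto_of_tendsto_of_tendsto_of_le_of_le' hlowT hupT ?_ ?_
  · filter_upwards [hmem] with ε hε using (main ε hε.1 hε.2).1
  · filter_upwards [hmem] with ε hε using (main ε hε.1 hε.2).2
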